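/- The sequence of sets (D_n^a)_{n∈ℕ}, where D_n^a = {θ ∈ Θ : R_{α,β,n}(θ) ≤ 1/a}, is a valid confidence sequence: Pr_{θ*}(∀ n ∈ ℕ : θ* ∈ D_n^a) ≥ 1 − a for every a ∈ (0,1). -/

import Mathlib

open MeasureTheory ENNReal
open scoped BigOperators Classical

noncomputable section

/-- Division in `ℝ≥0∞` with the convention that the ratio is `0` when the
denominator is `0`. -/
def safeDiv (a b : ℝ≥0∞) : ℝ≥0∞ := if b = 0 then 0 else a / b

variable {d : ℕ} {π : Fin d → Type*} [∀ i, MeasurableSpace (π i)]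

/-- The marginal density on the coordinates in `S`, obtained by integrating a density
out over the coordinates in `[d] \ S` (as a function of the full vector, depending only
on the coordinates in `S`). -/
def marginal (μ : ∀ i, Measure (π i)) (S : Finset (Fin d))
    (f : (∀ i, π i) → ℝ≥0∞) : (∀ i, π i) → ℝ≥0∞ :=
  MeasureTheory.lmarginal μ Sᶜ f

/-- The conditional density of the coordinates in `T1` given the coordinates in `T2`,
with the convention that the ratio is `0` when the denominator is `0`. -/
def condDens (μ : ∀ i, Measure (π i)) (T1 T2 : Finset (Fin d))
    (f : (∀ i, π i) → ℝ≥0∞) (x : ∀ i, π i) : ℝ≥0∞ :=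
  safeDiv (marginal μ (T1 ∪ T2) f x) (marginal μ T2 f x)

/-- `𝕊_d`: the nonempty subsets of `[d]`. -/
abbrev Sd (d : ℕ) := {S : Finset (Fin d) // S.Nonempty}

/-- `𝕋_d`: ordered pairs of disjoint nonempty subsets of `[d]`. -/
abbrev Td (d : ℕ) := {T : Finset (Fin d) × Finset (Fin d) //
  T.1.Nonempty ∧ T.2.Nonempty ∧ Disjoint T.1 T.2}

/-- The individual composite likelihood
`p_{α,β}(x;θ) = ∏_S p_S(x_S;θ)^(α_S/γ) ∏_T p(x_{T←}|x_{T→};θ)^(β_T/γ)`,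
where `f = p(·;θ)` is the joint density. -/
def compLik (μ : ∀ i, Measure (π i)) (α : Sd d → ℝ) (β : Td d → ℝ) (γ : ℝ)
    (f : (∀ i, π i) → ℝ≥0∞) (x : ∀ i, π i) : ℝ≥0∞ :=
  (∏ S : Sd d, marginal μ S.1 f x ^ (α S / γ)) *
  (∏ T : Td d, condDens μ T.1.1 T.1.2 f x ^ (β T / γ))

/-! If `f` and `g` are the densities at the estimate and at `θstar`, then under `g` the ratio of
the conditional densities of `x_A` given `x_B` has mean at most `1`: given `x_B`, dividing by the
conditional density of `g` cancels the law of `x_A`, and what remains is the total mass of the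
conditional density of `f`. Marginal densities are the case `B = ∅`. The exponents sum to `1`, so by
Hölder's inequality the ratio of the composite likelihoods has mean at most `1` too. Each estimate
depends only on the earlier observations, so the running product of these ratios is a nonnegative
supermartingale started at `1`, and Ville's inequality bounds by `a` the probability that it ever
reaches `1 / a`. -/

open ProbabilityTheory

section SafeDiv

lemma safeDiv_of_ne_zero {a b : ℝ≥0∞} (hb : b ≠ 0) : safeDiv a b = a / b := if_neg hb

lemma safeDiv_eq_mul (a b : ℝ≥0∞) : safeDiv a b = safeDiv 1 b * a := by
  by_cases hb : b = 0
  · simp only [safeDiv, if_pos hb, zero_mul]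
  · rw [safeDiv_of_ne_zero hb, safeDiv_of_ne_zero hb, one_div, mul_comm, div_eq_mul_inv]

lemma safeDiv_self_le_one (a : ℝ≥0∞) : safeDiv a a ≤ 1 := by
  unfold safeDiv
  split_ifs
  exacts [zero_le_one, ENNReal.div_self_le_one]

lemma measurable_safeDiv {T : Type*} [MeasurableSpace T] {f g : T → ℝ≥0∞}
    (hf : Measurable f) (hg : Measurable g) : Measurable fun x => safeDiv (f x) (g x) :=
  Measurable.ite (hg (measurableSet_singleton 0)) measurable_const (hf.div hg)

end SafeDiv

section Lmarginal

variable {ι : Type*} [DecidableEq ι] {E : ι → Type*} [∀ i, MeasurableSpace (E i)]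
  (μ : ∀ i, Measure (E i)) {s : Finset ι} {f h : (∀ i, E i) → ℝ≥0∞}

lemma lmarginal_mul_of_dependsOn (hh : DependsOn h (s : Set ι)ᶜ) (hf : Measurable f) :
    ∫⋯∫⁻_s, h * f ∂μ = h * ∫⋯∫⁻_s, f ∂μ := by
  ext x
  have h_eq (y : ∀ i : s, E i) : h (Function.updateFinset x s y) = h x :=
    hh fun i hi => Function.updateFinset_def (x := x) ▸ dif_neg hi
  simp only [lmarginal, Pi.mul_apply, h_eq]
  exact lintegral_const_mul _ (hf.comp measurable_updateFinset)

lemma lmarginal_zero : ∫⋯∫⁻_s, (0 : (∀ i, E i) → ℝ≥0∞) ∂μ = 0 :=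
  funext fun _ => lintegral_zero

lemma ae_lt_top_of_lmarginal_ne_top [Fintype ι] [∀ i, SigmaFinite (μ i)] (hf : Measurable f)
    (hfin : ∀ x, (∫⋯∫⁻_s, f ∂μ) x ≠ ∞) : ∀ᵐ x ∂Measure.pi μ, f x < ∞ := by
  have h_meas : MeasurableSet {x | ¬ f x < ∞} := (measurableSet_lt hf measurable_const).compl
  have h_lmarginal : ∫⋯∫⁻_s, {x | ¬ f x < ∞}.indicator 1 ∂μ = ∫⋯∫⁻_s, 0 ∂μ := by
    ext x
    refine lintegral_congr_ae ?_
    filter_upwards [ae_lt_top (hf.comp measurable_updateFinset) (hfin x)] with y hy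
    exact Set.indicator_of_notMem (not_not_intro hy) _
  rw [ae_iff, ← lintegral_indicator_one h_meas,
    lintegral_eq_of_lmarginal_eq s (measurable_one.indicator h_meas) measurable_zero h_lmarginal]
  exact lintegral_zero

lemma ae_eq_zero_of_lmarginal_eq_zero [Fintype ι] [∀ i, SigmaFinite (μ i)] (hf : Measurable f) :
    ∀ᵐ x ∂Measure.pi μ, (∫⋯∫⁻_s, f ∂μ) x = 0 → f x = 0 := by
  let zeros : (∀ i, E i) → ℝ≥0∞ := Set.indicator {0} 1 ∘ ∫⋯∫⁻_s, f ∂μ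
  have h_meas : Measurable zeros :=
    (measurable_one.indicator (measurableSet_singleton 0)).comp (hf.lmarginal μ)
  have h_dep : DependsOn zeros (s : Set ι)ᶜ :=
    fun _ _ h => congrArg (Set.indicator {0} 1) (lmarginal_congr μ f h)
  have h_lmarginal : ∫⋯∫⁻_s, zeros * f ∂μ = ∫⋯∫⁻_s, 0 ∂μ := by
    ext x
    rw [lmarginal_mul_of_dependsOn μ h_dep hf, Pi.mul_apply, lmarginal_zero]
    by_cases hx : (∫⋯∫⁻_s, f ∂μ) x = 0
    · rw [hx, mul_zero, Pi.zero_apply]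
    · have h_zero : zeros x = 0 := Set.indicator_of_notMem hx 1
      rw [h_zero, zero_mul, Pi.zero_apply]
  have h_ae := (lintegral_eq_zero_iff (h_meas.mul hf)).mp <|
    (lintegral_eq_of_lmarginal_eq s (h_meas.mul hf) measurable_zero h_lmarginal).trans
      lintegral_zero
  filter_upwards [h_ae] with x hx h_zero
  simpa [zeros, h_zero] using hx

end Lmarginal

section Marginal

variable (μ : ∀ i, Measure (π i)) {A B S : Finset (Fin d)} {f g q r : (∀ i, π i) → ℝ≥0∞}

lemma dependsOn_marginal : DependsOn (marginal μ S f) S :=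
  fun _ _ h => lmarginal_congr μ f fun i hi => h i (by simpa using hi)

lemma dependsOn_condDens : DependsOn (condDens μ A B f) (A ∪ B : Finset (Fin d)) :=
  fun _ _ h => congrArg₂ safeDiv (dependsOn_marginal μ h)
    (dependsOn_marginal μ fun i hi => h i (Finset.mem_union_right A hi))

variable [∀ i, SigmaFinite (μ i)]

lemma marginal_empty (x : ∀ i, π i) : marginal μ ∅ f x = ∫⁻ y, f y ∂Measure.pi μ := by
  rw [marginal, Finset.compl_empty, lmarginal_univ]

lemma condDens_empty_right (hf : ∫⁻ x, f x ∂Measure.pi μ = 1) :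
    condDens μ A ∅ f = marginal μ A f := by
  ext x
  rw [condDens, marginal_empty, hf, Finset.union_empty, safeDiv_of_ne_zero one_ne_zero, div_one]

lemma measurable_marginal (hf : Measurable f) : Measurable (marginal μ S f) := hf.lmarginal μ

lemma measurable_condDens (hf : Measurable f) : Measurable (condDens μ A B f) :=
  measurable_safeDiv (measurable_marginal μ hf) (measurable_marginal μ hf)

/- Tonelli over `Bᶜ = A ∪ (A ∪ B)ᶜ`: the coordinates outside `A ∪ B` act on `g` only. -/
lemma marginal_mul_eq_lmarginal (hAB : Disjoint A B) (hr : Measurable r)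
    (hr_dep : DependsOn r (A ∪ B : Finset (Fin d))) (hg : Measurable g) :
    marginal μ B (r * g) = ∫⋯∫⁻_A, r * marginal μ (A ∪ B) g ∂μ := by
  have h_compl : Bᶜ = A ∪ (A ∪ B)ᶜ := by
    ext i
    have h_notMem : i ∈ A → i ∉ B := fun hA => Finset.disjoint_left.mp hAB hA
    simp only [Finset.mem_compl, Finset.mem_union]
    tauto
  have h_disj : Disjoint A (A ∪ B)ᶜ :=
    disjoint_compl_right.mono_left Finset.subset_union_left
  rw [marginal, h_compl, lmarginal_union μ _ (hr.mul hg) h_disj,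
    lmarginal_mul_of_dependsOn μ (by rwa [Finset.coe_compl, compl_compl]) hg]
  rfl

lemma lmarginal_marginal_union (hAB : Disjoint A B) (hf : Measurable f) :
    ∫⋯∫⁻_A, marginal μ (A ∪ B) f ∂μ = marginal μ B f := by
  simpa only [one_mul] using (marginal_mul_eq_lmarginal μ hAB measurable_one
    (fun _ _ _ => rfl) hf).symm

lemma lmarginal_marginal_self (hf : Measurable f) (x : ∀ i, π i) :
    (∫⋯∫⁻_S, marginal μ S f ∂μ) x = ∫⁻ y, f y ∂Measure.pi μ := by
  rw [← marginal_empty μ x, ← lmarginal_marginal_union μ (Finset.disjoint_empty_right S) hf,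
    Finset.union_empty]

lemma lmarginal_condDens (hAB : Disjoint A B) (hf : Measurable f) (x : ∀ i, π i) :
    (∫⋯∫⁻_A, condDens μ A B f ∂μ) x = safeDiv (marginal μ B f x) (marginal μ B f x) := by
  have h_dep : DependsOn (fun x => safeDiv 1 (marginal μ B f x)) (A : Set (Fin d))ᶜ :=
    fun _ _ h => congrArg (safeDiv 1) <| dependsOn_marginal μ fun i hi =>
      h i (Finset.disjoint_right.mp hAB hi)
  have h_factor : condDens μ A B f =
      (fun x => safeDiv 1 (marginal μ B f x)) * marginal μ (A ∪ B) f :=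
    funext fun x => safeDiv_eq_mul _ _
  rw [h_factor, lmarginal_mul_of_dependsOn μ h_dep (measurable_marginal μ hf),
    lmarginal_marginal_union μ hAB hf, Pi.mul_apply, ← safeDiv_eq_mul]

lemma ae_marginal_ne_zero (hg : Measurable g) :
    ∀ᵐ x ∂(Measure.pi μ).withDensity g, marginal μ S g x ≠ 0 := by
  rw [ae_withDensity_iff hg]
  filter_upwards [ae_eq_zero_of_lmarginal_eq_zero μ (s := Sᶜ) hg] with x hx
  exact mt hx

lemma ae_marginal_ne_zero_and_ne_top (hg : Measurable g) (hg_fin : ∫⁻ x, g x ∂Measure.pi μ ≠ ∞) :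
    ∀ᵐ x ∂(Measure.pi μ).withDensity g, marginal μ S g x ≠ 0 ∧ marginal μ S g x ≠ ∞ := by
  have h_lt_top : ∀ᵐ x ∂Measure.pi μ, marginal μ S g x < ∞ :=
    ae_lt_top_of_lmarginal_ne_top μ (s := S) (measurable_marginal μ hg) fun x => by
      rwa [lmarginal_marginal_self μ hg]
  filter_upwards [ae_marginal_ne_zero μ hg,
    (withDensity_absolutelyContinuous _ g).ae_le h_lt_top] with x h0 h_top
  exact ⟨h0, h_top.ne⟩

lemma ae_condDens_ne_zero (hg : Measurable g) (hg_fin : ∫⁻ x, g x ∂Measure.pi μ ≠ ∞) :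
    ∀ᵐ x ∂(Measure.pi μ).withDensity g, condDens μ A B g x ≠ 0 := by
  filter_upwards [ae_marginal_ne_zero μ (S := A ∪ B) hg,
    ae_marginal_ne_zero_and_ne_top μ (S := B) hg hg_fin] with x hAB hB
  rw [condDens, safeDiv_of_ne_zero hB.1]
  exact ENNReal.div_ne_zero.mpr ⟨hAB, hB.2⟩

end Marginal

section LikelihoodRatio

variable (μ : ∀ i, Measure (π i)) [∀ i, SigmaFinite (μ i)] {A B : Finset (Fin d)}
  {f g q : (∀ i, π i) → ℝ≥0∞}

/- Given `x_B`, the factor `marginal B g / marginal (A ∪ B) g` turns the conditional density of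
`x_A` under `g` into at most `1`, which leaves `∫⋯∫⁻_A, q ∂μ ≤ 1`. -/
lemma lintegral_mul_marginal_div_mul_le (hAB : Disjoint A B) (hg : Measurable g)
    (hq : Measurable q) (hq_dep : DependsOn q (A ∪ B : Finset (Fin d)))
    (hq_le : ∀ x, (∫⋯∫⁻_A, q ∂μ) x ≤ 1) :
    ∫⁻ x, q x * (marginal μ B g x / marginal μ (A ∪ B) g x) * g x ∂Measure.pi μ ≤
      ∫⁻ x, g x ∂Measure.pi μ := by
  have hB : DependsOn (marginal μ B g) (A : Set (Fin d))ᶜ := fun _ _ h =>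
    dependsOn_marginal μ fun i hi => h i (Finset.disjoint_right.mp hAB hi)
  have hr : Measurable (q * (marginal μ B g / marginal μ (A ∪ B) g)) :=
    hq.mul ((measurable_marginal μ hg).div (measurable_marginal μ hg))
  have hr_dep : DependsOn (q * (marginal μ B g / marginal μ (A ∪ B) g))
      (A ∪ B : Finset (Fin d)) := fun _ _ h =>
    congrArg₂ (· * ·) (hq_dep h) <| congrArg₂ (· / ·)
      (dependsOn_marginal μ fun i hi => h i (Finset.mem_union_right A hi)) (dependsOn_marginal μ h)
  refine lintegral_le_of_lmarginal_le Bᶜ (hr.mul hg) hg ?_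
  calc marginal μ B (q * (marginal μ B g / marginal μ (A ∪ B) g) * g)
      = ∫⋯∫⁻_A, q * (marginal μ B g / marginal μ (A ∪ B) g) * marginal μ (A ∪ B) g ∂μ :=
        marginal_mul_eq_lmarginal μ hAB hr hr_dep hg
    _ ≤ ∫⋯∫⁻_A, marginal μ B g * q ∂μ := by
        refine lmarginal_mono fun x => ?_
        simp only [Pi.mul_apply, Pi.div_apply]
        rw [mul_assoc, mul_comm, mul_comm (_ / _)]
        gcongr
        exact ENNReal.mul_div_le
    _ = marginal μ B g * ∫⋯∫⁻_A, q ∂μ := lmarginal_mul_of_dependsOn μ hB hq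
    _ ≤ marginal μ B g := fun x => mul_le_of_le_one_right' (hq_le x)

lemma lintegral_div_condDens_le (hAB : Disjoint A B) (hg : Measurable g)
    (hg_fin : ∫⁻ x, g x ∂Measure.pi μ ≠ ∞) (hq : Measurable q)
    (hq_dep : DependsOn q (A ∪ B : Finset (Fin d))) (hq_le : ∀ x, (∫⋯∫⁻_A, q ∂μ) x ≤ 1) :
    ∫⁻ x, q x / condDens μ A B g x ∂(Measure.pi μ).withDensity g ≤
      ∫⁻ x, g x ∂Measure.pi μ := by
  have h_ratio : ∀ᵐ x ∂(Measure.pi μ).withDensity g, q x / condDens μ A B g x =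
      q x * (marginal μ B g x / marginal μ (A ∪ B) g x) := by
    filter_upwards [ae_marginal_ne_zero_and_ne_top μ hg hg_fin] with x hx
    rw [condDens, safeDiv_of_ne_zero hx.1, div_eq_mul_inv,
      ENNReal.inv_div (Or.inl hx.2) (Or.inl hx.1)]
  have hr : Measurable fun x => q x * (marginal μ B g x / marginal μ (A ∪ B) g x) :=
    hq.mul ((measurable_marginal μ hg).div (measurable_marginal μ hg))
  rw [lintegral_congr_ae h_ratio, lintegral_withDensity_eq_lintegral_mul _ hg hr]
  simp only [Pi.mul_apply, mul_comm (g _)]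
  exact lintegral_mul_marginal_div_mul_le μ hAB hg hq hq_dep hq_le

/-- The factors of the composite likelihood before raising them to their exponents: the marginal
densities, indexed by `Sd d`, and the conditional densities, indexed by `Td d`. -/
def likFactor (μ : ∀ i, Measure (π i)) (f : (∀ i, π i) → ℝ≥0∞) (j : Sd d ⊕ Td d) :
    (∀ i, π i) → ℝ≥0∞ :=
  j.elim (fun S => marginal μ S.1 f) (fun T => condDens μ T.1.1 T.1.2 f)

/-- The exponents `α_S / γ` and `β_T / γ` of the composite likelihood, indexed like
`likFactor`. -/
def likWeight (α : Sd d → ℝ) (β : Td d → ℝ) (γ : ℝ) : Sd d ⊕ Td d → ℝ :=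
  Sum.elim (fun S => α S / γ) (fun T => β T / γ)

lemma lintegral_likFactor_div_le_one (hf : Measurable f) (hf_le : ∫⁻ x, f x ∂Measure.pi μ ≤ 1)
    (hg : Measurable g) (hg_one : ∫⁻ x, g x ∂Measure.pi μ = 1) (j : Sd d ⊕ Td d) :
    ∫⁻ x, likFactor μ f j x / likFactor μ g j x ∂(Measure.pi μ).withDensity g ≤ 1 := by
  have hg_fin : ∫⁻ x, g x ∂Measure.pi μ ≠ ∞ := hg_one ▸ one_ne_top
  refine hg_one.le.trans' ?_
  rcases j with S | T
  · simp only [likFactor, Sum.elim_inl, ← condDens_empty_right μ hg_one]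
    refine lintegral_div_condDens_le μ (Finset.disjoint_empty_right _) hg hg_fin
      (measurable_marginal μ hf) ?_ fun x => ?_
    · rw [Finset.union_empty]
      exact dependsOn_marginal μ
    · rwa [lmarginal_marginal_self μ hf]
  · exact lintegral_div_condDens_le μ T.2.2.2 hg hg_fin (measurable_condDens μ hf)
      (dependsOn_condDens μ) fun x =>
        (lmarginal_condDens μ T.2.2.2 hf x).trans_le (safeDiv_self_le_one _)

lemma ae_likFactor_ne_zero (hg : Measurable g) (hg_fin : ∫⁻ x, g x ∂Measure.pi μ ≠ ∞) :
    ∀ᵐ x ∂(Measure.pi μ).withDensity g, ∀ j, likFactor μ g j x ≠ 0 :=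
  ae_all_iff.mpr fun j => match j with
    | .inl _ => ae_marginal_ne_zero μ hg
    | .inr _ => ae_condDens_ne_zero μ hg hg_fin

lemma measurable_likFactor {Θ : Type*} [MeasurableSpace Θ] {p : Θ → (∀ i, π i) → ℝ≥0∞}
    (hp : Measurable (Function.uncurry p)) (j : Sd d ⊕ Td d) :
    Measurable fun z : Θ × (∀ i, π i) => likFactor μ (p z.1) j z.2 := by
  have h_marginal (S : Finset (Fin d)) :
      Measurable fun z : Θ × (∀ i, π i) => marginal μ S (p z.1) z.2 := by
    refine Measurable.lintegral_prod_right
      (f := fun (z : Θ × (∀ i, π i)) y => p z.1 (Function.updateFinset z.2 Sᶜ y)) ?_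
    exact hp.comp <| (measurable_fst.comp measurable_fst).prodMk <|
      measurable_updateFinset'.comp ((measurable_snd.comp measurable_fst).prodMk measurable_snd)
  rcases j with S | T
  · exact h_marginal S.1
  · exact measurable_safeDiv (h_marginal _) (h_marginal _)

end LikelihoodRatio

section CompositeLikelihood

lemma rpow_ne_zero_of_nonneg {x : ℝ≥0∞} {w : ℝ} (hw : 0 ≤ w) (hx : x ≠ 0) : x ^ w ≠ 0 := by
  rw [Ne, ENNReal.rpow_eq_zero_iff]
  rintro (⟨h_zero, -⟩ | ⟨-, h_neg⟩)
  exacts [hx h_zero, h_neg.not_ge hw]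

variable (μ : ∀ i, Measure (π i)) {α : Sd d → ℝ} {β : Td d → ℝ} {γ : ℝ}
  {f g : (∀ i, π i) → ℝ≥0∞}

lemma likWeight_nonneg (hα : ∀ S, 0 ≤ α S) (hβ : ∀ T, 0 ≤ β T) (hγ : 0 ≤ γ) (j : Sd d ⊕ Td d) :
    0 ≤ likWeight α β γ j :=
  match j with
  | .inl S => div_nonneg (hα S) hγ
  | .inr T => div_nonneg (hβ T) hγ

lemma sum_likWeight (hγ : γ = ∑ S, α S + ∑ T, β T) (hγ_ne : γ ≠ 0) :
    ∑ j, likWeight α β γ j = 1 := by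
  simp only [likWeight, Fintype.sum_sum_type, Sum.elim_inl, Sum.elim_inr]
  rw [← Finset.sum_div, ← Finset.sum_div, ← add_div, ← hγ, div_self hγ_ne]

lemma compLik_eq_prod (x : ∀ i, π i) :
    compLik μ α β γ f x = ∏ j, likFactor μ f j x ^ likWeight α β γ j :=
  (Fintype.prod_sum_type fun j => likFactor μ f j x ^ likWeight α β γ j).symm

lemma compLik_ne_zero (hw : ∀ j, 0 ≤ likWeight α β γ j) {x : ∀ i, π i}
    (hx : ∀ j, likFactor μ g j x ≠ 0) : compLik μ α β γ g x ≠ 0 := by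
  rw [compLik_eq_prod]
  exact Finset.prod_ne_zero_iff.mpr fun j _ => rpow_ne_zero_of_nonneg (hw j) (hx j)

lemma compLik_div_compLik (hw : ∀ j, 0 ≤ likWeight α β γ j) {x : ∀ i, π i}
    (hx : ∀ j, likFactor μ g j x ≠ 0) :
    compLik μ α β γ f x / compLik μ α β γ g x =
      ∏ j, (likFactor μ f j x / likFactor μ g j x) ^ likWeight α β γ j := by
  simp only [compLik_eq_prod, ENNReal.div_rpow_of_nonneg _ _ (hw _)]
  exact (ENNReal.prod_div_distrib_of_ne_zero fun j _ =>
    rpow_ne_zero_of_nonneg (hw j) (hx j)).symm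

variable [∀ i, SigmaFinite (μ i)]

lemma measurable_compLik {Θ : Type*} [MeasurableSpace Θ] {p : Θ → (∀ i, π i) → ℝ≥0∞}
    (hp : Measurable (Function.uncurry p)) :
    Measurable fun z : Θ × (∀ i, π i) => compLik μ α β γ (p z.1) z.2 := by
  simp only [compLik_eq_prod]
  exact Finset.measurable_prod _ fun j _ => (measurable_likFactor μ hp j).pow_const _

lemma ae_compLik_ne_zero (hw : ∀ j, 0 ≤ likWeight α β γ j) (hg : Measurable g)
    (hg_fin : ∫⁻ x, g x ∂Measure.pi μ ≠ ∞) :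
    ∀ᵐ x ∂(Measure.pi μ).withDensity g, compLik μ α β γ g x ≠ 0 := by
  filter_upwards [ae_likFactor_ne_zero μ hg hg_fin] with x hx
  exact compLik_ne_zero μ hw hx

lemma lintegral_compLik_div_le_one (hw : ∀ j, 0 ≤ likWeight α β γ j)
    (hw_sum : ∑ j, likWeight α β γ j = 1)
    (hf : Measurable f) (hf_le : ∫⁻ x, f x ∂Measure.pi μ ≤ 1)
    (hg : Measurable g) (hg_one : ∫⁻ x, g x ∂Measure.pi μ = 1) :
    ∫⁻ x, compLik μ α β γ f x / compLik μ α β γ g x ∂(Measure.pi μ).withDensity g ≤ 1 := by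
  set ν := (Measure.pi μ).withDensity g
  have h_meas {k : (∀ i, π i) → ℝ≥0∞} (hk : Measurable k) (j : Sd d ⊕ Td d) :
      Measurable (likFactor μ k j) :=
    (measurable_likFactor μ (p := fun _ : Unit => k) (hk.comp measurable_snd) j).comp
      (measurable_prodMk_left (x := ()))
  calc ∫⁻ x, compLik μ α β γ f x / compLik μ α β γ g x ∂ν
      = ∫⁻ x, ∏ j, (likFactor μ f j x / likFactor μ g j x) ^ likWeight α β γ j ∂ν := by
        refine lintegral_congr_ae ?_
        filter_upwards [ae_likFactor_ne_zero μ hg (hg_one ▸ one_ne_top)] with x hx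
        exact compLik_div_compLik μ hw hx
    _ ≤ ∏ j, (∫⁻ x, likFactor μ f j x / likFactor μ g j x ∂ν) ^ likWeight α β γ j :=
        ENNReal.lintegral_prod_norm_pow_le _
          (fun j _ => ((h_meas hf j).div (h_meas hg j)).aemeasurable) hw_sum fun j _ => hw j
    _ ≤ 1 := Finset.prod_le_one' fun j _ =>
        ENNReal.rpow_le_one (lintegral_likFactor_div_le_one μ hf hf_le hg hg_one j) (hw j)

end CompositeLikelihood

section Supermartingale

/- Independence lets `Y` be frozen while `X` is integrated out. -/
lemma lintegral_mul_comp_le {T E Ω : Type*} [MeasurableSpace T] [MeasurableSpace E]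
    {m mΩ : MeasurableSpace Ω} {P : Measure Ω} [IsFiniteMeasure P] (hm : m ≤ mΩ) {X : Ω → E}
    (hX : Measurable X) (h_indep : Indep m (MeasurableSpace.comap X inferInstance) P)
    {V : Ω → ℝ≥0∞} (hV : Measurable[m] V) {Y : Ω → T} (hY : Measurable[m] Y)
    {r : T × E → ℝ≥0∞} (hr : Measurable r) (hr_le : ∀ y, ∫⁻ x, r (y, x) ∂P.map X ≤ 1) :
    ∫⁻ ω, V ω * r (Y ω, X ω) ∂P ≤ ∫⁻ ω, V ω ∂P := by
  have hW_m : Measurable[m] fun ω => (V ω, Y ω) := hV.prodMk hY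
  have hW : Measurable fun ω => (V ω, Y ω) := hW_m.mono hm le_rfl
  have h_map := (indepFun_iff_map_prod_eq_prod_map_map hW.aemeasurable hX.aemeasurable).mp <|
    (IndepFun_iff_Indep _ X P).mpr (indep_of_indep_of_le_left h_indep hW_m.comap_le)
  have h_integrand : Measurable fun z : (ℝ≥0∞ × T) × E => z.1.1 * r (z.1.2, z.2) :=
    (measurable_fst.comp measurable_fst).mul
      (hr.comp ((measurable_snd.comp measurable_fst).prodMk measurable_snd))
  calc ∫⁻ ω, V ω * r (Y ω, X ω) ∂P
      = ∫⁻ z, z.1.1 * r (z.1.2, z.2) ∂P.map fun ω => ((V ω, Y ω), X ω) :=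
        (lintegral_map h_integrand (hW.prodMk hX)).symm
    _ = ∫⁻ w, ∫⁻ x, w.1 * r (w.2, x) ∂P.map X ∂P.map fun ω => (V ω, Y ω) := by
        rw [h_map, lintegral_prod _ h_integrand.aemeasurable]
    _ ≤ ∫⁻ w, w.1 ∂P.map fun ω => (V ω, Y ω) := by
        refine lintegral_mono fun w => ?_
        exact (lintegral_const_mul _ (hr.comp measurable_prodMk_left)).trans_le
          (mul_le_of_le_one_right' (hr_le w.2))
    _ = ∫⁻ ω, V ω ∂P := lintegral_map measurable_fst hW

variable {Ω : Type*} {mΩ : MeasurableSpace Ω} {P : Measure Ω} {ℱ : Filtration ℕ mΩ}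
  {Z ρ : ℕ → Ω → ℝ≥0∞}

/-- A supermartingale with values in `ℝ≥0∞`. Conditional expectations are expressed through
integrals over the events of the filtration, so that no integrability is required. -/
structure LSupermartingale (Z : ℕ → Ω → ℝ≥0∞) (ℱ : Filtration ℕ mΩ) (P : Measure Ω) : Prop where
  adapted : Adapted ℱ Z
  setLIntegral_succ_le : ∀ n s, MeasurableSet[ℱ n] s →
    ∫⁻ ω in s, Z (n + 1) ω ∂P ≤ ∫⁻ ω in s, Z n ω ∂P

/- Splitting the set where the level has not been crossed before time `n` according to whether
`Z n` crosses it keeps the left-hand side below `∫⁻ ω, Z 0 ω ∂P`. -/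
lemma LSupermartingale.mul_measure_biUnion_add_setLIntegral_le (hZ : LSupermartingale Z ℱ P)
    (c : ℝ≥0∞) (n : ℕ) :
    c * P (⋃ k < n, {ω | c ≤ Z k ω}) + ∫⁻ ω in (⋃ k < n, {ω | c ≤ Z k ω})ᶜ, Z n ω ∂P ≤
      ∫⁻ ω, Z 0 ω ∂P := by
  have h_hit {k m : ℕ} (hkm : k ≤ m) : MeasurableSet[ℱ m] {ω | c ≤ Z k ω} :=
    hZ.adapted.measurable_le hkm measurableSet_Ici
  induction n with
  | zero => simp
  | succ n ih =>
    set before := ⋃ k < n, {ω | c ≤ Z k ω}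
    set now := {ω | c ≤ Z n ω}
    have h_before : MeasurableSet[ℱ n] before :=
      .biUnion (Set.to_countable _) fun k hk => h_hit (Nat.le_of_lt hk)
    have h_now : MeasurableSet[ℱ n] now := h_hit le_rfl
    have h_compl : beforeᶜ \ now = (before ∪ now)ᶜ := by rw [Set.compl_union, Set.sdiff_eq]
    rw [Set.biUnion_lt_succ]
    calc c * P (before ∪ now) + ∫⁻ ω in (before ∪ now)ᶜ, Z (n + 1) ω ∂P
        ≤ c * (P before + P (beforeᶜ ∩ now)) + ∫⁻ ω in (before ∪ now)ᶜ, Z n ω ∂P := by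
          refine add_le_add (mul_le_mul_right ?_ c)
            (hZ.setLIntegral_succ_le n _ (h_before.union h_now).compl)
          rw [← Set.union_sdiff_self, Set.sdiff_eq, Set.inter_comm]
          exact measure_union_le _ _
      _ ≤ c * P before + (∫⁻ ω in beforeᶜ ∩ now, Z n ω ∂P + ∫⁻ ω in beforeᶜ \ now, Z n ω ∂P) := by
          rw [mul_add, add_assoc, h_compl]
          refine add_le_add_right (add_le_add_left ?_ _) _
          rw [← setLIntegral_const]
          exact setLIntegral_mono' (ℱ.le n _ (h_before.compl.inter h_now)) fun ω hω => hω.2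
      _ = c * P before + ∫⁻ ω in beforeᶜ, Z n ω ∂P := by
          rw [lintegral_inter_add_sdiff _ _ (ℱ.le n _ h_now)]
      _ ≤ ∫⁻ ω, Z 0 ω ∂P := ih

theorem LSupermartingale.ville_inequality (hZ : LSupermartingale Z ℱ P) (c : ℝ≥0∞) :
    c * P {ω | ∃ n, c ≤ Z n ω} ≤ ∫⁻ ω, Z 0 ω ∂P := by
  rw [Set.ofPred_exists, measure_iUnion_eq_iSup_accumulate, ENNReal.mul_iSup]
  refine iSup_le fun n => ?_
  rw [Set.accumulate_eq_biInter_lt]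
  exact le_self_add.trans (hZ.mul_measure_biUnion_add_setLIntegral_le c (n + 1))

lemma lSupermartingale_prod (hρ : ∀ n, Measurable[ℱ (n + 1)] (ρ n))
    (h_le : ∀ n V, Measurable[ℱ n] V → ∫⁻ ω, V ω * ρ n ω ∂P ≤ ∫⁻ ω, V ω ∂P) :
    LSupermartingale (fun n ω => ∏ i ∈ Finset.range n, ρ i ω) ℱ P := by
  have h_adapted : Adapted ℱ fun n ω => ∏ i ∈ Finset.range n, ρ i ω := fun n =>
    Finset.measurable_prod (m := ℱ n) _ fun i hi =>
      (hρ i).mono (ℱ.mono (Finset.mem_range.mp hi)) le_rfl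
  refine ⟨h_adapted, fun n s hs => ?_⟩
  simp only [← lintegral_indicator (ℱ.le n _ hs), Finset.prod_range_succ, Set.indicator_mul_left]
  exact h_le n _ ((h_adapted n).indicator hs)

end Supermartingale

section RunningRatio

variable {Ω Θ : Type*} {mΩ : MeasurableSpace Ω} [MeasurableSpace Θ] {μ : ∀ i, Measure (π i)}
  [∀ i, SigmaFinite (μ i)] {p : Θ → (∀ i, π i) → ℝ≥0∞} {α : Sd d → ℝ} {β : Td d → ℝ} {γ : ℝ}
  {P : Measure Ω} [IsProbabilityMeasure P] {X : ℕ → Ω → ∀ i, π i} {θstar : Θ}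

lemma lintegral_eq_one_of_map_eq_withDensity {E : Type*} [MeasurableSpace E] {ν : Measure E}
    {Y : Ω → E} (hY : Measurable Y) {g : E → ℝ≥0∞} (h_law : P.map Y = ν.withDensity g) :
    ∫⁻ x, g x ∂ν = 1 := by
  have : IsProbabilityMeasure (P.map Y) := Measure.isProbabilityMeasure_map hY.aemeasurable
  rw [← setLIntegral_univ, ← withDensity_apply _ .univ, ← h_law, measure_univ]

lemma lSupermartingale_prod_compLik_div (hp : Measurable (Function.uncurry p))
    (hp_le : ∀ θ, ∫⁻ x, p θ x ∂Measure.pi μ ≤ 1) (hw : ∀ j, 0 ≤ likWeight α β γ j)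
    (hw_sum : ∑ j, likWeight α β γ j = 1) {ℱ : Filtration ℕ mΩ}
    (hX : ∀ i, Measurable[ℱ (i + 1)] (X i))
    (h_indep : ∀ i, Indep (ℱ i) (MeasurableSpace.comap (X i) inferInstance) P)
    (h_law : ∀ i, P.map (X i) = (Measure.pi μ).withDensity (p θstar))
    {θtilde : ℕ → Ω → Θ} (hθtilde : ∀ i, Measurable[ℱ i] (θtilde i)) :
    LSupermartingale (fun n ω => ∏ i ∈ Finset.range n,
      compLik μ α β γ (p (θtilde i ω)) (X i ω) / compLik μ α β γ (p θstar) (X i ω)) ℱ P := by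
  have hX' (i : ℕ) : Measurable (X i) := (hX i).mono (ℱ.le _) le_rfl
  have hp_slice (θ : Θ) : Measurable (p θ) := hp.comp measurable_prodMk_left
  let ratio (z : Θ × (∀ i, π i)) : ℝ≥0∞ :=
    compLik μ α β γ (p z.1) z.2 / compLik μ α β γ (p θstar) z.2
  have h_ratio : Measurable ratio :=
    (measurable_compLik μ hp).div <|
      (measurable_compLik μ hp).comp (measurable_const.prodMk measurable_snd)
  have h_ratio_le (i : ℕ) (θ : Θ) : ∫⁻ x, ratio (θ, x) ∂P.map (X i) ≤ 1 := by
    have h_one : ∫⁻ x, p θstar x ∂Measure.pi μ = 1 :=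
      lintegral_eq_one_of_map_eq_withDensity (hX' i) (h_law i)
    have h_le := lintegral_compLik_div_le_one μ hw hw_sum (hp_slice θ) (hp_le θ)
      (hp_slice θstar) h_one
    rwa [← h_law i] at h_le
  exact lSupermartingale_prod (ρ := fun i ω => ratio (θtilde i ω, X i ω))
    (fun i => h_ratio.comp (((hθtilde i).mono (ℱ.mono i.le_succ) le_rfl).prodMk (hX i)))
    fun i V hV => lintegral_mul_comp_le (Y := θtilde i) (r := ratio) (ℱ.le i) (hX' i) (h_indep i) hV
      (hθtilde i) h_ratio (h_ratio_le i)

theorem running_confidence_sequence_valid_general (hp : Measurable (Function.uncurry p))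
    (hp_le : ∀ θ, ∫⁻ x, p θ x ∂Measure.pi μ ≤ 1) (hα : ∀ S, 0 ≤ α S) (hβ : ∀ T, 0 ≤ β T)
    (hγ : γ = ∑ S, α S + ∑ T, β T) (hγ_pos : 0 < γ) {ℱ : Filtration ℕ mΩ}
    (hX : ∀ i, Measurable[ℱ (i + 1)] (X i))
    (h_indep : ∀ i, Indep (ℱ i) (MeasurableSpace.comap (X i) inferInstance) P)
    (h_law : ∀ i, P.map (X i) = (Measure.pi μ).withDensity (p θstar))
    {θtilde : ℕ → Ω → Θ} (hθtilde : ∀ i, Measurable[ℱ i] (θtilde i)) {a : ℝ} (ha : 0 < a) :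
    ENNReal.ofReal (1 - a) ≤ P {ω | ∀ n, safeDiv
      (∏ i ∈ Finset.range n, compLik μ α β γ (p (θtilde i ω)) (X i ω))
      (∏ i ∈ Finset.range n, compLik μ α β γ (p θstar) (X i ω)) ≤ 1 / ENNReal.ofReal a} := by
  set covered : Set Ω := {ω | ∀ n, safeDiv _ _ ≤ _}
  have hX' (i : ℕ) : Measurable (X i) := (hX i).mono (ℱ.le _) le_rfl
  have hw := likWeight_nonneg (α := α) (β := β) hα hβ hγ_pos.le
  have h_ville := (lSupermartingale_prod_compLik_div hp hp_le hw (sum_likWeight hγ hγ_pos.ne')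
    hX h_indep h_law hθtilde).ville_inequality (ENNReal.ofReal a)⁻¹
  have h_ne_zero : ∀ᵐ ω ∂P, ∀ i, compLik μ α β γ (p θstar) (X i ω) ≠ 0 :=
    ae_all_iff.mpr fun i => ae_of_ae_map (hX' i).aemeasurable <| h_law i ▸
      ae_compLik_ne_zero μ hw (hp.comp measurable_prodMk_left)
        (lintegral_eq_one_of_map_eq_withDensity (hX' i) (h_law i) ▸ one_ne_top)
  have h_crossing : coveredᶜ ≤ᵐ[P] {ω | ∃ n, (ENNReal.ofReal a)⁻¹ ≤ ∏ i ∈ Finset.range n,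
      compLik μ α β γ (p (θtilde i ω)) (X i ω) / compLik μ α β γ (p θstar) (X i ω)} := by
    filter_upwards [h_ne_zero] with ω hω h_not
    obtain ⟨n, hn⟩ := not_forall.mp h_not
    rw [safeDiv_of_ne_zero (Finset.prod_ne_zero_iff.mpr fun i _ => hω i), one_div, not_le] at hn
    exact ⟨n, (ENNReal.prod_div_distrib_of_ne_zero fun i _ => hω i).symm ▸ hn.le⟩
  have h_compl : P coveredᶜ ≤ ENNReal.ofReal a := by
    refine (measure_mono_ae h_crossing).trans ?_
    simpa [ENNReal.inv_mul_le_iff, ha] using h_ville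
  rw [ENNReal.ofReal_sub _ ha.le, ENNReal.ofReal_one, tsub_le_iff_right]
  calc (1 : ℝ≥0∞) = P Set.univ := measure_univ.symm
    _ ≤ P covered + P coveredᶜ := measure_univ_le_add_compl covered
    _ ≤ P covered + ENNReal.ofReal a := by gcongr

end RunningRatio

section PastFiltration

variable {Ω E : Type*} {mΩ : MeasurableSpace Ω} [MeasurableSpace E] {X : ℕ → Ω → E}

/-- The natural filtration of the observations `X 0, X 1, …` delayed by one step: the σ-algebra at
time `n` is generated by the first `n` observations, so that it is trivial at time `0`. -/
def pastFiltration (X : ℕ → Ω → E) (hX : ∀ i, Measurable (X i)) : Filtration ℕ mΩ where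
  seq n := MeasurableSpace.comap (fun ω (j : Fin n) => X j ω) inferInstance
  mono' _ _ hmn := MeasurableSpace.comap_le_comap_of_eq_comp
    (fun y j => y (Fin.castLE hmn j))
    (measurable_pi_lambda _ fun j => measurable_pi_apply (Fin.castLE hmn j)) rfl
  le' _ := (measurable_pi_lambda _ fun _ => hX _).comap_le

lemma measurable_pastFiltration_succ (hX : ∀ i, Measurable (X i)) (i : ℕ) :
    Measurable[pastFiltration X hX (i + 1)] (X i) :=
  measurable_iff_comap_le.mpr <| MeasurableSpace.comap_le_comap_pi
    (g := fun j : Fin (i + 1) => X j) (Fin.last i)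

lemma indep_pastFiltration {P : Measure Ω} (hX : ∀ i, Measurable (X i)) (h_indep : iIndepFun X P)
    (i : ℕ) : Indep (pastFiltration X hX i) (MeasurableSpace.comap (X i) inferInstance) P := by
  have h_disj : Disjoint (Finset.range i) {i} :=
    Finset.disjoint_singleton_right.mpr Finset.notMem_range_self
  have h_last : Measurable fun y : ({i} : Finset ℕ) → E => y ⟨i, Finset.mem_singleton_self i⟩ :=
    measurable_pi_apply _
  have h_past : Measurable fun (y : Finset.range i → E) (j : Fin i) =>
      y ⟨j, Finset.mem_range.mpr j.2⟩ :=
    measurable_pi_lambda _ fun _ => measurable_pi_apply _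
  exact (h_indep.indepFun_finset _ _ h_disj hX).comp h_past h_last

end PastFiltration

/-- The sequence of sets `(D_n^a)_{n∈ℕ}`, where
`D_n^a = {θ ∈ Θ : R_{α,β,n}(θ) ≤ 1/a}`, is a valid confidence sequence:
`Pr_{θ*}(∀ n ∈ ℕ : θ* ∈ D_n^a) ≥ 1 − a` for every `a ∈ (0,1)`. -/
theorem running_confidence_sequence_valid
    {d : ℕ} (hd : 1 ≤ d)
    {π : Fin d → Type*} [∀ i, MeasurableSpace (π i)]
    (μ : ∀ i, Measure (π i)) [∀ i, SigmaFinite (μ i)]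
    {Θ : Type*} [MeasurableSpace Θ]
    (p : Θ → (∀ i, π i) → ℝ≥0∞)
    (hp_meas : Measurable (Function.uncurry p))
    (hp_prob : ∀ θ : Θ, ∫⁻ x, p θ x ∂(Measure.pi μ) = 1)
    (α : Sd d → ℝ) (β : Td d → ℝ)
    (hα : ∀ S, 0 ≤ α S) (hβ : ∀ T, 0 ≤ β T)
    (γ : ℝ) (hγ : γ = ∑ S, α S + ∑ T, β T) (hγpos : 0 < γ)
    {Ω : Type*} [MeasurableSpace Ω]
    (Pr : Measure Ω) [IsProbabilityMeasure Pr]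
    (θstar : Θ)
    -- `X 0, X 1, X 2, …` is the i.i.d. sequence `X_1, X_2, …` (0-indexed),
    -- each observation having density `p(·;θ*)` with respect to `μ`
    (X : ℕ → Ω → (∀ i, π i))
    (hX : ∀ i, Measurable (X i))
    (hiid : ProbabilityTheory.iIndepFun X Pr)
    (hlaw : ∀ i, Measure.map (X i) Pr = (Measure.pi μ).withDensity (p θstar))
    -- the natural filtration `F n = σ(X_1,…,X_n)` (so `F 0` is trivial)
    (F : ℕ → MeasurableSpace Ω)
    (hF : ∀ n, F n = MeasurableSpace.comap (fun ω => fun j : Fin n => X j ω)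
      (inferInstance : MeasurableSpace (Fin n → ∀ i, π i)))
    -- non-anticipating estimators: `θtilde i` is the estimator `θ̃_i`
    -- built from `X_1,…,X_i`, i.e. measurable with respect to `F i`
    (θtilde : ℕ → Ω → Θ)
    (hθtilde : ∀ i, @Measurable Ω Θ (F i) _ (θtilde i))
    (a : ℝ) (ha0 : 0 < a) (ha1 : a < 1) :
    ENNReal.ofReal (1 - a) ≤
      Pr {ω | ∀ n : ℕ, safeDiv
          (∏ i ∈ Finset.range n, compLik μ α β γ (p (θtilde i ω)) (X i ω))
          (∏ i ∈ Finset.range n, compLik μ α β γ (p θstar) (X i ω))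
        ≤ 1 / ENNReal.ofReal a} := by
  obtain rfl : F = fun n => MeasurableSpace.comap (fun ω (j : Fin n) => X j ω) inferInstance :=
    funext hF
  exact running_confidence_sequence_valid_general hp_meas (fun θ => (hp_prob θ).le) hα hβ hγ hγpos
    (ℱ := pastFiltration X hX) (measurable_pastFiltration_succ hX) (indep_pastFiltration hX hiid)
    hlaw hθtilde ha0
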